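/- There exist constants c > 0 and C > 0 such that for every q ∈ H̃^{1/2}(Γ), sup over U ∈ X with ‖U‖_X = 1 of Re E(q,U) is at least c ‖q‖_{H̃^{1/2}(Γ)} − C ‖q‖_{H̃^{-1/2}(Γ)}; that is, E satisfies an inf-sup (surjectivity-type) estimate up to a weaker norm. -/

import Mathlib

noncomputable section

open MeasureTheory Complex Filter Topology
open scoped Real NNReal ContDiff

/-- The plane `ℝ²`. -/
abbrev R2 : Type := EuclideanSpace ℝ (Fin 2)

/-- Euclidean dot product on `ℝ²`. -/
def rdot (x ξ : R2) : ℝ := x 0 * ξ 0 + x 1 * ξ 1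

/-- `testFT φ ξ = ∫ e^{i x·ξ} φ(x) dx`, the (inverse-type) Fourier integral of a
test function `φ`. -/
def testFT (φ : R2 → ℂ) (ξ : R2) : ℂ :=
  ∫ x : R2, Complex.exp (Complex.I * (rdot x ξ : ℂ)) * φ x

/-- The squared `H^s(ℝ²)` norm of the distribution whose Fourier transform is `F`:
`‖f‖² = (2π)⁻² ∫ (1+|ξ|²)^s |f̂(ξ)|² dξ`. -/
def wnormSq (s : ℝ) (F : R2 → ℂ) : ℝ :=
  ((2 * π) ^ 2)⁻¹ * ∫ ξ : R2, ((1 : ℝ) + ‖ξ‖ ^ 2) ^ s * ‖F ξ‖ ^ 2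

/-- The `H^s(ℝ²)` norm (Fourier-side representation). -/
def wnorm (s : ℝ) (F : R2 → ℂ) : ℝ := Real.sqrt (wnormSq s F)

/-- `F` is the Fourier transform of an element of `H^s(ℝ²)`. -/
def MemHs (s : ℝ) (F : R2 → ℂ) : Prop :=
  AEStronglyMeasurable F (volume : Measure R2) ∧
    Integrable (fun ξ : R2 => ((1 : ℝ) + ‖ξ‖ ^ 2) ^ s * ‖F ξ‖ ^ 2) volume

/-- An element `f` of `H̃^s(Γ)`: a distribution on `ℝ²` of Sobolev regularity `s`
supported in the closure of `Γ`, represented by its Fourier transform `ft`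
(a continuous function, `f` being a compactly supported distribution).
The support condition is expressed by testing against smooth compactly supported
functions `φ` whose support avoids `closure Γ`, via the Parseval pairing
`∫ f φ dx = (2π)⁻² ∫ f̂(ξ) φ̌(ξ) dξ` with `φ̌(ξ) = ∫ e^{ix·ξ} φ(x) dx`. -/
structure HTildeElt (s : ℝ) (Γ : Set R2) where
  ft : R2 → ℂ
  cont : Continuous ft
  mem : Integrable (fun ξ : R2 => ((1 : ℝ) + ‖ξ‖ ^ 2) ^ s * ‖ft ξ‖ ^ 2) volume
  supp : ∀ φ : R2 → ℂ, ContDiff ℝ ∞ φ → HasCompactSupport φ →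
    tsupport φ ∩ closure Γ = ∅ → (∫ ξ : R2, ft ξ * testFT φ ξ) = 0

/-- `Γ` is a bounded Lipschitz domain in `ℝ²`: a nonempty bounded open set whose
boundary is locally, after a rigid motion, the graph of a Lipschitz function with
the domain on one side. -/
def IsLipschitzDomain (Γ : Set R2) : Prop :=
  IsOpen Γ ∧ Bornology.IsBounded Γ ∧ Γ.Nonempty ∧
    ∀ x ∈ frontier Γ, ∃ (e : R2 ≃ₗᵢ[ℝ] R2) (L : ℝ≥0) (f : ℝ → ℝ) (U : Set R2),
      LipschitzWith L f ∧ IsOpen U ∧ x ∈ U ∧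
        ∀ y ∈ U, (y ∈ Γ ↔ f (e y 0) < e y 1)

/-- `ξ·V̂(ξ)`, i.e. `-i` times the Fourier transform of `div V`. -/
def dotFt (F1 F2 : R2 → ℂ) (ξ : R2) : ℂ := (ξ 0 : ℂ) * F1 ξ + (ξ 1 : ℂ) * F2 ξ

/-- `ξ⊥·V̂(ξ)`, i.e. `-i` times the Fourier transform of `curl V`. -/
def curlFt (F1 F2 : R2 → ℂ) (ξ : R2) : ℂ := (ξ 1 : ℂ) * F1 ξ - (ξ 0 : ℂ) * F2 ξ

/-- An element of `X = H̃^{-1/2}_div(Γ)`: a pair of elements of `H̃^{-1/2}(Γ)`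
whose distributional divergence also belongs to `H̃^{-1/2}(Γ)`. -/
structure Xelt (Γ : Set R2) where
  c1 : HTildeElt (-(1/2) : ℝ) Γ
  c2 : HTildeElt (-(1/2) : ℝ) Γ
  divMem : Integrable (fun ξ : R2 =>
    ((1 : ℝ) + ‖ξ‖ ^ 2) ^ (-(1/2) : ℝ) * ‖dotFt c1.ft c2.ft ξ‖ ^ 2) volume

/-- The Fourier transform of `div V`. -/
def divFt {Γ : Set R2} (V : Xelt Γ) (ξ : R2) : ℂ :=
  Complex.I * dotFt V.c1.ft V.c2.ft ξ

/-- The squared `H`-norm `‖V‖²_H` of a vector field. -/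
def HnormSq {Γ : Set R2} (V : Xelt Γ) : ℝ :=
  wnormSq (-(1/2)) V.c1.ft + wnormSq (-(1/2)) V.c2.ft

/-- The squared `X`-norm `‖V‖²_X = ‖V‖²_H + ‖div V‖²_{H̃^{-1/2}}`. -/
def XnormSq {Γ : Set R2} (V : Xelt Γ) : ℝ :=
  HnormSq V + wnormSq (-(1/2)) (divFt V)

/-- The `X`-norm. -/
def Xnorm {Γ : Set R2} (V : Xelt Γ) : ℝ := Real.sqrt (XnormSq V)

/-- `ĝ₀(ξ) = i/√(k²-|ξ|²)`, with the branch `√(k²-|ξ|²) = i√(|ξ|²-k²)` for `|ξ| > k`. -/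
def g0hat (k : ℝ) (ξ : R2) : ℂ :=
  if ‖ξ‖ < k then Complex.I / ((Real.sqrt (k ^ 2 - ‖ξ‖ ^ 2) : ℝ) : ℂ)
  else 1 / ((Real.sqrt (‖ξ‖ ^ 2 - k ^ 2) : ℝ) : ℂ)

/-- The integrand of the sesquilinear form `B`:
`ĝ₀(ξ) [ (|ξ|²-k²) a₁ b̄₁ - k² a₂ b̄₂ ]` with `a₁ = ξ·Ŵ/|ξ|`, `a₂ = ξ⊥·Ŵ/|ξ|`, etc. -/
def Bintegrand (k : ℝ) (F1 F2 G1 G2 : R2 → ℂ) (ξ : R2) : ℂ :=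
  g0hat k ξ *
    (((‖ξ‖ ^ 2 - k ^ 2 : ℝ) : ℂ) * (dotFt F1 F2 ξ * starRingEnd ℂ (dotFt G1 G2 ξ)) -
      ((k ^ 2 : ℝ) : ℂ) * (curlFt F1 F2 ξ * starRingEnd ℂ (curlFt G1 G2 ξ))) /
    ((‖ξ‖ ^ 2 : ℝ) : ℂ)

/-- The sesquilinear form `B(W,V)`. -/
def Bform (k : ℝ) {Γ : Set R2} (W V : Xelt Γ) : ℂ :=
  ∫ ξ : R2, Bintegrand k W.c1.ft W.c2.ft V.c1.ft V.c2.ft ξ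

/-- The sesquilinear form `E(q,V) = B(curl⃗ q, V)`, where
`curl⃗ q = (∂q/∂x₂, -∂q/∂x₁)` has Fourier transform `(iξ₂ q̂, -iξ₁ q̂)`. -/
def Eform (k : ℝ) {Γ : Set R2} (q : HTildeElt (1/2 : ℝ) Γ) (V : Xelt Γ) : ℂ :=
  ∫ ξ : R2, Bintegrand k (fun η => Complex.I * (η 1 : ℂ) * q.ft η)
      (fun η => -(Complex.I * (η 0 : ℂ) * q.ft η)) V.c1.ft V.c2.ft ξ

/-- The inner product of the Hilbert space `X`; by the Riesz representation
theorem, every bounded conjugate-linear functional on `X` is `V ↦ Xinner Y V`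
for a unique `Y ∈ X`, with functional norm `Xnorm Y`. -/
def Xinner {Γ : Set R2} (Y V : Xelt Γ) : ℂ :=
  ((((2 * π) ^ 2)⁻¹ : ℝ) : ℂ) * ∫ ξ : R2, ((((1 : ℝ) + ‖ξ‖ ^ 2) ^ (-(1/2) : ℝ) : ℝ) : ℂ) *
    (Y.c1.ft ξ * starRingEnd ℂ (V.c1.ft ξ) + Y.c2.ft ξ * starRingEnd ℂ (V.c2.ft ξ) +
      divFt Y ξ * starRingEnd ℂ (divFt V ξ))

/-- `√(k²-|ξ|²)`, with the branch `i√(|ξ|²-k²)` for `|ξ| > k`. -/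
def rootk (k : ℝ) (ξ : R2) : ℂ :=
  if ‖ξ‖ < k then ((Real.sqrt (k ^ 2 - ‖ξ‖ ^ 2) : ℝ) : ℂ)
  else Complex.I * ((Real.sqrt (‖ξ‖ ^ 2 - k ^ 2) : ℝ) : ℂ)

/-- The Fourier multiplier `i/(2√(k²-|ξ|²))` of the Helmholtz single-layer
operator `T` with kernel `e^{ik|x-y|}/(4π|x-y|)`. -/
def mT (k : ℝ) (ξ : R2) : ℂ := Complex.I / (2 * rootk k ξ)

/-- The Fourier multiplier `1/(2|ξ|)` of the Laplace single-layer operator `T₀`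
with kernel `1/(4π|x-y|)`. -/
def mT0 (ξ : R2) : ℂ := 1 / (2 * ((‖ξ‖ : ℝ) : ℂ))

/-- The Fourier multiplier of `R = T - T₀`. -/
def mR (k : ℝ) (ξ : R2) : ℂ := mT k ξ - mT0 ξ

/-- The distributions with Fourier data `G` and `E` have the same restriction to
the open set `Γ`: `⟨G - E, φ⟩ = 0` for all smooth `φ` compactly supported in `Γ`
(pairing written on the Fourier side). -/
def AgreeOn (Γ : Set R2) (G E : R2 → ℂ) : Prop :=
  ∀ φ : R2 → ℂ, ContDiff ℝ ∞ φ → HasCompactSupport φ → tsupport φ ⊆ Γ →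
    (∫ ξ : R2, (G ξ - E ξ) * testFT φ ξ) = 0

/-- The duality pairing `⟨f, ψ⟩` between `H^{1/2}(Γ)` and `H̃^{-1/2}(Γ)`, written
on the Fourier side (Plancherel): `(2π)⁻² ∫ f̂(ξ) conj(ψ̂(ξ)) dξ`, where `G = f̂`
is the Fourier data of (an extension of) `f`. -/
def dualPair (G ψ : R2 → ℂ) : ℂ :=
  ((((2 * π) ^ 2)⁻¹ : ℝ) : ℂ) * ∫ ξ : R2, G ξ * starRingEnd ℂ (ψ ξ)


open MeasureTheory Complex Filter Topology
open scoped Real NNReal ContDiff FourierTransform SchwartzMap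

theorem testFT_eq_fourierInv (f : R2 → ℂ) (ξ : R2) :
    testFT f ξ = 𝓕⁻ f ((2 * π)⁻¹ • ξ) := by
  rw [Real.fourierInv_eq', testFT]
  congr 1; ext x
  rw [smul_eq_mul]
  congr 2
  rw [inner_smul_right]
  have : (2 * π * ((2 * π)⁻¹ * inner ℝ x ξ)) = rdot x ξ := by
    rw [← mul_assoc, mul_inv_cancel₀ (by positivity), one_mul]
    simp [rdot, PiLp.inner_apply, Fin.sum_univ_two]; ring
  rw [this, mul_comm]

theorem schwartz_decay4 (f : 𝓢(R2, ℂ)) : ∃ A : ℝ, 0 ≤ A ∧ ∀ x, ‖f x‖ ≤ A * ((1 + ‖x‖ ^ 2) ^ 2)⁻¹ := by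
  obtain ⟨C0, h0, hC0⟩ := f.decay 0 0
  obtain ⟨C4, h4, hC4⟩ := f.decay 4 0
  refine ⟨2 * (C0 + C4), by positivity, fun x => ?_⟩
  have a0 := hC0 x
  have a4 := hC4 x
  simp only [norm_iteratedFDeriv_zero, pow_zero, one_mul] at a0 a4
  rw [← div_eq_mul_inv, le_div_iff₀ (by positivity)]
  have : (1 + ‖x‖ ^ 2) ^ 2 ≤ 2 + 2 * ‖x‖ ^ 4 := by nlinarith [sq_nonneg (1 - ‖x‖ ^ 2)]
  nlinarith [norm_nonneg (f x), mul_le_mul_of_nonneg_left this (norm_nonneg (f x))]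

theorem testFT_decay (f : R2 → ℂ) (hf : ContDiff ℝ ∞ f) (hc : HasCompactSupport f) :
    Continuous (testFT f) ∧
    (∃ A : ℝ, 0 ≤ A ∧ ∀ ξ, ‖testFT f ξ‖ ≤ A * ((1 + ‖ξ‖ ^ 2) ^ 2)⁻¹) ∧
    ∫ ξ, testFT f ξ = ((2 * π) ^ 2 : ℝ) * f 0 := by
  set g : 𝓢(R2, ℂ) := hc.toSchwartzMap hf with hg
  have hgf : (g : R2 → ℂ) = f := by ext x; simp [hg]
  have key : testFT f = fun ξ => (𝓕⁻ g) ((2 * π)⁻¹ • ξ) := by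
    ext ξ; rw [testFT_eq_fourierInv, SchwartzMap.fourierInv_coe, hgf]
  have hpi : (0:ℝ) < 2 * π := by positivity
  refine ⟨?_, ?_, ?_⟩
  · rw [key]; exact (𝓕⁻ g).continuous.comp (by fun_prop)
  · obtain ⟨A, hA, h⟩ := schwartz_decay4 (𝓕⁻ g)
    refine ⟨A * (2 * π) ^ 4, by positivity, fun ξ => ?_⟩
    rw [key]
    refine (h _).trans ?_
    rw [mul_assoc]
    gcongr
    rw [norm_smul, norm_inv, Real.norm_of_nonneg hpi.le]
    rw [← div_eq_mul_inv, le_div_iff₀ (by positivity), inv_mul_le_iff₀ (by positivity)]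
    have : 1 + ‖ξ‖ ^ 2 ≤ (1 + ((2 * π)⁻¹ * ‖ξ‖) ^ 2) * (2 * π) ^ 2 := by
      have : (1 + ((2 * π)⁻¹ * ‖ξ‖) ^ 2) * (2 * π) ^ 2 = (2 * π) ^ 2 + ‖ξ‖ ^ 2 := by
        field_simp
      rw [this]
      nlinarith [Real.pi_gt_three]
    calc (1 + ‖ξ‖ ^ 2) ^ 2 ≤ ((1 + ((2 * π)⁻¹ * ‖ξ‖) ^ 2) * (2 * π) ^ 2) ^ 2 := by gcongr
      _ = _ := by ring
  · rw [key]
    refine (Measure.integral_comp_smul volume (fun y => (𝓕⁻ g) y) (2 * π)⁻¹).trans ?_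
    have : ∫ y, (𝓕⁻ g) y = f 0 := by
      have h1 : 𝓕 (𝓕⁻ g) = g := FourierTransform.fourier_fourierInv_eq g
      have h2 : (𝓕 (𝓕⁻ g)) 0 = ∫ y, (𝓕⁻ g) y := by
        rw [SchwartzMap.fourier_coe, Real.fourier_eq]; simp
      rw [← h2, h1, hgf]
    rw [this]
    simp only [finrank_euclideanSpace, Fintype.card_fin, inv_pow, inv_inv]
    rw [abs_of_nonneg (by positivity)]; simp

theorem integrable_w2 : Integrable (fun ξ : R2 => ((1 + ‖ξ‖ ^ 2) ^ 2)⁻¹) := by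
  have := integrable_rpow_neg_one_add_norm_sq (E := R2) (μ := volume) (r := 4) (by simp; norm_num)
  refine this.congr (Eventually.of_forall fun ξ => ?_)
  simp only
  rw [show (-4 / 2 : ℝ) = -(2 : ℕ) by norm_num, Real.rpow_neg (by positivity), Real.rpow_natCast]

theorem peetre (ξ η : R2) : 1 + ‖ξ‖ ^ 2 ≤ 2 * (1 + ‖η‖ ^ 2) * (1 + ‖ξ - η‖ ^ 2) := by
  have : ‖ξ‖ ≤ ‖ξ - η‖ + ‖η‖ := by simpa using norm_add_le (ξ - η) η
  have h2 : ‖ξ‖ ^ 2 ≤ (‖ξ - η‖ + ‖η‖) ^ 2 := by gcongr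
  nlinarith [sq_nonneg (‖ξ - η‖ - ‖η‖), sq_nonneg (‖ξ - η‖ * ‖η‖)]

/-- pointwise AM-GM bound. -/
theorem amgm_pt (w f h B : ℝ) (hw : 1 ≤ w) (hf : 0 ≤ f) (hh : 0 ≤ h)
    (hb : h ≤ B * (w ^ 2)⁻¹) :
    f * h ≤ w ^ (-(1/2) : ℝ) * f ^ 2 + B ^ 2 * (w ^ 2)⁻¹ := by
  have w0 : 0 < w := by linarith
  set s := w ^ (1/2 : ℝ) with hs
  have s0 : 0 < s := by positivity
  have hss : s ^ 2 = w := by rw [hs, ← Real.rpow_natCast, ← Real.rpow_mul w0.le]; norm_num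
  have hs1 : w ^ (-(1/2) : ℝ) = s⁻¹ := by rw [Real.rpow_neg w0.le]
  have hsw : s ≤ w := by nlinarith
  rw [hs1]
  have h1 : f * h ≤ s⁻¹ * f ^ 2 + s * h ^ 2 := by
    have : s⁻¹ * f ^ 2 + s * h ^ 2 - f * h = s⁻¹ * ((f - s * h) ^ 2 + s * (f * h)) := by
      field_simp; ring
    have h3 : 0 ≤ s⁻¹ * ((f - s * h) ^ 2 + s * (f * h)) := by positivity
    linarith
  have h2 : s * h ^ 2 ≤ B ^ 2 * (w ^ 2)⁻¹ := by
    calc s * h ^ 2 ≤ w * (B * (w ^ 2)⁻¹) ^ 2 := by gcongr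
      _ = B ^ 2 * (w ^ 2)⁻¹ * w⁻¹ := by field_simp
      _ ≤ B ^ 2 * (w ^ 2)⁻¹ * 1 := by gcongr; exact inv_le_one_of_one_le₀ hw
      _ = _ := by ring
  linarith

theorem amgm_pt' (h : R2 → ℂ) (A : ℝ) (hA : 0 ≤ A)
    (hh : ∀ ξ, ‖h ξ‖ ≤ A * ((1 + ‖ξ‖ ^ 2) ^ 2)⁻¹) (F : R2 → ℂ) (η ξ : R2) :
    ‖F ξ * h (ξ - η)‖ ≤ (1 + ‖ξ‖ ^ 2) ^ (-(1/2) : ℝ) * ‖F ξ‖ ^ 2 +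
      (A * (2 * (1 + ‖η‖ ^ 2)) ^ 2) ^ 2 * ((1 + ‖ξ‖ ^ 2) ^ 2)⁻¹ := by
  rw [norm_mul]
  apply amgm_pt _ _ _ _ (by nlinarith [sq_nonneg ‖ξ‖]) (norm_nonneg _) (norm_nonneg _)
  refine (hh _).trans ?_
  rw [mul_assoc]; gcongr
  rw [← div_eq_mul_inv, le_div_iff₀ (by positivity), inv_mul_le_iff₀ (by positivity)]
  calc _ ≤ (2 * (1 + ‖η‖ ^ 2) * (1 + ‖ξ - η‖ ^ 2)) ^ 2 := by gcongr; exact peetre ξ η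
    _ = _ := by ring

theorem limit_lemma (h : R2 → ℂ) (hc : Continuous h) (A : ℝ) (hA : 0 ≤ A)
    (hh : ∀ ξ, ‖h ξ‖ ≤ A * ((1 + ‖ξ‖ ^ 2) ^ 2)⁻¹) (G : R2 → ℂ) (hG : Continuous G)
    (hGi : Integrable (fun ξ => ‖G ξ‖ * ((1 + ‖ξ‖ ^ 2) ^ 2)⁻¹)) :
    Tendsto (fun R : ℝ => ∫ ξ, G ξ * ((R ^ 2 : ℝ) * h (R • ξ))) atTop (𝓝 (G 0 * ∫ ξ, h ξ)) := by
  have hw2c : Continuous (fun ξ : R2 => ((1 + ‖ξ‖ ^ 2) ^ 2)⁻¹) :=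
    Continuous.inv₀ (by fun_prop) (fun x => by positivity)
  set S : Set R2 := Metric.ball 0 1
  have hS : MeasurableSet S := measurableSet_ball
  have hIntg : ∀ R : ℝ, 1 ≤ R → Integrable (fun ξ => G ξ * ((R ^ 2 : ℝ) * h (R • ξ))) := by
    intro R hR
    refine (hGi.const_mul (R ^ 2 * A)).mono' (by fun_prop) (Eventually.of_forall fun ξ => ?_)
    have : ‖h (R • ξ)‖ ≤ A * ((1 + ‖ξ‖ ^ 2) ^ 2)⁻¹ := by
      refine (hh _).trans ?_
      gcongr
      rw [norm_smul, Real.norm_of_nonneg (by linarith)]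
      nlinarith [norm_nonneg ξ]
    simp only [norm_mul, Complex.norm_real, Real.norm_of_nonneg (sq_nonneg R)]
    calc _ ≤ ‖G ξ‖ * (R ^ 2 * (A * ((1 + ‖ξ‖ ^ 2) ^ 2)⁻¹)) := by gcongr
      _ = _ := by ring
  have T1 : Tendsto (fun R : ℝ => ∫ ξ in S, G ξ * ((R ^ 2 : ℝ) * h (R • ξ))) atTop
      (𝓝 (G 0 * ∫ ξ, h ξ)) := by
    obtain ⟨M, hM⟩ := (isCompact_closedBall (0:R2) 1).exists_bound_of_continuousOn hG.continuousOn
    have e : ∀ᶠ R : ℝ in atTop, ∫ ζ, S.indicator G (R⁻¹ • ζ) * h ζ =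
        ∫ ξ in S, G ξ * ((R ^ 2 : ℝ) * h (R • ξ)) := by
      filter_upwards [eventually_ge_atTop (1:ℝ)] with R hR
      have R0 : R ≠ 0 := by positivity
      have := Measure.integral_comp_smul (volume : Measure R2)
        (fun ζ => S.indicator G (R⁻¹ • ζ) * h ζ) R
      simp only [smul_smul, inv_mul_cancel₀ R0, one_smul, finrank_euclideanSpace,
        Fintype.card_fin] at this
      rw [abs_of_nonneg (by positivity)] at this
      rw [← integral_indicator hS]
      have e2 : ∀ ξ, S.indicator (fun ξ => G ξ * ((R ^ 2 : ℝ) * h (R • ξ))) ξ =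
          (R ^ 2 : ℝ) * (S.indicator G ξ * h (R • ξ)) := by
        intro ξ
        by_cases hx : ξ ∈ S
        · simp [hx]; ring
        · simp [hx]
      simp_rw [e2]
      rw [integral_const_mul, this, Complex.real_smul, ← mul_assoc, ← Complex.ofReal_mul,
        mul_inv_cancel₀ (by positivity)]; simp
    refine Tendsto.congr' e ?_
    rw [← integral_const_mul]
    apply tendsto_integral_filter_of_dominated_convergence
      (bound := fun ζ => M * (A * ((1 + ‖ζ‖ ^ 2) ^ 2)⁻¹))
    · refine Eventually.of_forall fun R => ?_
      refine AEStronglyMeasurable.mul ?_ hc.aestronglyMeasurable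
      have : Measurable (S.indicator G) := hG.measurable.indicator hS
      exact (this.comp (by fun_prop)).aestronglyMeasurable
    · refine Eventually.of_forall fun R => Eventually.of_forall fun ζ => ?_
      rw [norm_mul]
      have M0 : 0 ≤ M := (norm_nonneg _).trans (hM 0 (by simp))
      refine mul_le_mul ?_ (hh _) (norm_nonneg _) M0
      by_cases hx : R⁻¹ • ζ ∈ S
      · rw [Set.indicator_of_mem hx]; exact hM _ (Metric.ball_subset_closedBall hx)
      · simp [hx, M0]
    · exact (integrable_w2.const_mul A).const_mul M
    · refine Eventually.of_forall fun ζ => ?_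
      refine Tendsto.mul_const _ ?_
      have h0 : Tendsto (fun R : ℝ => R⁻¹ • ζ) atTop (𝓝 0) := by
        simpa using (tendsto_inv_atTop_zero (𝕜 := ℝ)).smul_const ζ
      have : ∀ᶠ R : ℝ in atTop, G (R⁻¹ • ζ) = S.indicator G (R⁻¹ • ζ) := by
        filter_upwards [h0.eventually (Metric.ball_mem_nhds 0 one_pos)] with R hR
        rw [Set.indicator_of_mem (show R⁻¹ • ζ ∈ S from hR)]
      exact Tendsto.congr' this ((hG.tendsto 0).comp h0)
  have T2 : Tendsto (fun R : ℝ => ∫ ξ in Sᶜ, G ξ * ((R ^ 2 : ℝ) * h (R • ξ))) atTop (𝓝 0) := by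
    have b : ∀ᶠ R : ℝ in atTop, ‖∫ ξ in Sᶜ, G ξ * ((R ^ 2 : ℝ) * h (R • ξ))‖ ≤
        (R ^ 2)⁻¹ * ∫ ξ in Sᶜ, 4 * A * (‖G ξ‖ * ((1 + ‖ξ‖ ^ 2) ^ 2)⁻¹) := by
      filter_upwards [eventually_ge_atTop (1:ℝ)] with R hR
      rw [← integral_const_mul]
      refine norm_integral_le_of_norm_le ((hGi.integrableOn.const_mul _).const_mul _) ?_
      filter_upwards [ae_restrict_mem hS.compl] with ξ hξ
      have hx : 1 ≤ ‖ξ‖ := by simpa [S] using hξ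
      simp only [norm_mul, Complex.norm_real, Real.norm_of_nonneg (sq_nonneg R)]
      have : R ^ 2 * ‖h (R • ξ)‖ ≤ (R ^ 2)⁻¹ * (4 * A * ((1 + ‖ξ‖ ^ 2) ^ 2)⁻¹) := by
        have h1 : ((1 + ‖R • ξ‖ ^ 2) ^ 2)⁻¹ ≤ (R ^ 4)⁻¹ * (4 * ((1 + ‖ξ‖ ^ 2) ^ 2)⁻¹) := by
          rw [norm_smul, Real.norm_of_nonneg (by linarith)]
          have h2 : (R ^ 4)⁻¹ * (4 * ((1 + ‖ξ‖ ^ 2) ^ 2)⁻¹) =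
              ((R ^ 2 * ((1 + ‖ξ‖ ^ 2) / 2)) ^ 2)⁻¹ := by field_simp; norm_num
          rw [h2]
          gcongr
          have : (1 + ‖ξ‖ ^ 2) / 2 ≤ ‖ξ‖ ^ 2 := by nlinarith
          nlinarith [mul_le_mul_of_nonneg_left this (sq_nonneg R)]
        calc R ^ 2 * ‖h (R • ξ)‖ ≤ R ^ 2 * (A * ((R ^ 4)⁻¹ * (4 * ((1 + ‖ξ‖ ^ 2) ^ 2)⁻¹))) := by
              gcongr; exact (hh _).trans (by gcongr)
          _ = _ := by field_simp
      calc _ ≤ ‖G ξ‖ * ((R ^ 2)⁻¹ * (4 * A * ((1 + ‖ξ‖ ^ 2) ^ 2)⁻¹)) := by gcongr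
        _ = _ := by ring
    refine squeeze_zero_norm' b ?_
    have : Tendsto (fun R : ℝ => (R ^ 2)⁻¹) atTop (𝓝 0) :=
      tendsto_inv_atTop_zero.comp (tendsto_pow_atTop two_ne_zero)
    simpa using this.mul_const (∫ ξ in Sᶜ, 4 * A * (‖G ξ‖ * ((1 + ‖ξ‖ ^ 2) ^ 2)⁻¹))
  have := T1.add T2
  rw [add_zero] at this
  refine Tendsto.congr' ?_ this
  filter_upwards [eventually_ge_atTop (1:ℝ)] with R hR
  exact integral_add_compl hS (hIntg R hR)

/-- the modulated, dilated cutoff. -/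
def cutMod (η : R2 → ℂ) (R : ℝ) (ξ₀ : R2) (x : R2) : ℂ :=
  Complex.exp (-(Complex.I * (rdot x ξ₀ : ℂ))) * η (R⁻¹ • x)

theorem rdot_contDiff (ξ₀ : R2) : ContDiff ℝ ∞ (fun x : R2 => rdot x ξ₀) := by
  unfold rdot; fun_prop

theorem cutMod_contDiff (η : R2 → ℂ) (h : ContDiff ℝ ∞ η) (R : ℝ) (ξ₀ : R2) :
    ContDiff ℝ ∞ (cutMod η R ξ₀) := by
  unfold cutMod
  have h1 : ContDiff ℝ ∞ (fun x : R2 => (rdot x ξ₀ : ℂ)) :=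
    Complex.ofRealCLM.contDiff.comp (rdot_contDiff ξ₀)
  have h2 : ContDiff ℝ ∞ (fun x : R2 => η (R⁻¹ • x)) := h.comp (by fun_prop)
  exact ((contDiff_const.mul h1).neg.cexp).mul h2

theorem cutMod_compact (η : R2 → ℂ) (h : HasCompactSupport η) (R : ℝ) (hR : R ≠ 0) (ξ₀ : R2) :
    HasCompactSupport (cutMod η R ξ₀) := by
  unfold cutMod
  exact HasCompactSupport.mul_left (h.comp_homeomorph (Homeomorph.smulOfNeZero R⁻¹ (inv_ne_zero hR)))

theorem testFT_cutMod (η : R2 → ℂ) (R : ℝ) (hR : 0 < R) (ξ₀ ξ : R2) :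
    testFT (cutMod η R ξ₀) ξ = (R ^ 2 : ℝ) * testFT η (R • (ξ - ξ₀)) := by
  unfold testFT cutMod
  have := Measure.integral_comp_smul (volume : Measure R2)
    (fun x => Complex.exp (Complex.I * (rdot x (R • (ξ - ξ₀)) : ℂ)) * η x) R⁻¹
  simp only [finrank_euclideanSpace, Fintype.card_fin] at this
  rw [abs_of_nonneg (by positivity), inv_pow, inv_inv, Complex.real_smul] at this
  rw [← this]
  congr 1; ext x
  rw [← mul_assoc, ← Complex.exp_add]
  congr 2
  have : rdot (R⁻¹ • x) (R • (ξ - ξ₀)) = rdot x ξ - rdot x ξ₀ := by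
    simp [rdot]; field_simp; ring
  rw [this]; push_cast; ring

theorem testFT_sub (f g : R2 → ℂ) (hf : Continuous f) (hfc : HasCompactSupport f)
    (hg : Continuous g) (hgc : HasCompactSupport g) (ξ : R2) :
    testFT (fun x => f x - g x) ξ = testFT f ξ - testFT g ξ := by
  have hr : Continuous (fun x : R2 => Complex.exp (Complex.I * (rdot x ξ : ℂ))) := by
    unfold rdot; fun_prop
  unfold testFT
  rw [← integral_sub]
  · simp_rw [mul_sub]
  · exact (hr.mul hf).integrable_of_hasCompactSupport hfc.mul_left
  · exact (hr.mul hg).integrable_of_hasCompactSupport hgc.mul_left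

theorem repro (Γ : Set R2) (hΓ : Bornology.IsBounded Γ) :
    ∃ ψ : R2 → ℂ, Continuous ψ ∧ ∃ A : ℝ, 0 ≤ A ∧ (∀ ξ, ‖ψ ξ‖ ≤ A * ((1 + ‖ξ‖ ^ 2) ^ 2)⁻¹) ∧
      ∀ (F : HTildeElt (-(1/2) : ℝ) Γ) (ξ₀ : R2), F.ft ξ₀ = ∫ ξ, F.ft ξ * ψ (ξ - ξ₀) := by
  obtain ⟨r, hr⟩ := hΓ.closure.subset_ball (0 : R2)
  set R0 : ℝ := max r 1 with hR0
  have R01 : 1 ≤ R0 := le_max_right _ _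
  have hcl : closure Γ ⊆ Metric.ball 0 R0 := hr.trans (Metric.ball_subset_ball (le_max_left _ _))
  let b : ContDiffBump (0 : R2) := ⟨1, 2, one_pos, one_lt_two⟩
  set η : R2 → ℂ := fun x => ((b x : ℝ) : ℂ) with hη
  have ηs : ContDiff ℝ ∞ η := Complex.ofRealCLM.contDiff.comp b.contDiff
  have ηc : HasCompactSupport η := b.hasCompactSupport.comp_left (g := fun y : ℝ => (y : ℂ)) (by simp)
  have η1 : ∀ x, ‖x‖ ≤ 1 → η x = 1 := by
    intro x hx
    have : b x = 1 := b.one_of_mem_closedBall (by simpa [b] using hx)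
    simp [hη, this]
  obtain ⟨hc, ⟨A, hA, hh⟩, hI⟩ := testFT_decay η ηs ηc
  set h := testFT η with hhdef
  have dil : ∀ (R : ℝ), 1 ≤ R → ∀ ξ, ‖h (R • ξ)‖ ≤ A * ((1 + ‖ξ‖ ^ 2) ^ 2)⁻¹ := by
    intro R hR ξ
    refine (hh _).trans ?_
    gcongr
    rw [norm_smul, Real.norm_of_nonneg (by linarith)]
    nlinarith [norm_nonneg ξ]
  -- the ψ
  refine ⟨fun ξ => (((2 * π) ^ 2)⁻¹ : ℝ) * ((R0 ^ 2 : ℝ) * h (R0 • ξ)), by fun_prop,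
    ((2 * π) ^ 2)⁻¹ * (R0 ^ 2 * A), by positivity, ?_, ?_⟩
  · intro ξ
    simp only [norm_mul, Complex.norm_real]
    rw [Real.norm_of_nonneg (by positivity), Real.norm_of_nonneg (by positivity), mul_assoc, mul_assoc]
    gcongr
    exact dil R0 R01 ξ
  · intro F ξ₀
    have hFi : ∀ R : ℝ, 1 ≤ R → Integrable (fun ξ => F.ft ξ * ((R ^ 2 : ℝ) * h (R • (ξ - ξ₀)))) := by
      intro R hR
      have hb := fun ξ => amgm_pt' (fun ξ => (R ^ 2 : ℝ) * h (R • ξ)) (R ^ 2 * A) (by positivity)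
        (by intro ξ
            simp only [norm_mul, Complex.norm_real, Real.norm_of_nonneg (sq_nonneg R)]
            rw [mul_assoc]; gcongr; exact dil R hR ξ) F.ft ξ₀ ξ
      refine (F.mem.add (integrable_w2.const_mul _)).mono' ?_ (Eventually.of_forall hb)
      have := F.cont
      fun_prop
    have hconst : ∀ R : ℝ, R0 ≤ R → ∫ ξ, F.ft ξ * ((R ^ 2 : ℝ) * h (R • (ξ - ξ₀))) =
        ∫ ξ, F.ft ξ * ((R0 ^ 2 : ℝ) * h (R0 • (ξ - ξ₀))) := by
      intro R hR
      have R0p : 0 < R0 := by linarith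
      have Rp : 0 < R := by linarith
      have hs := F.supp (fun x => cutMod η R ξ₀ x - cutMod η R0 ξ₀ x)
        ((cutMod_contDiff η ηs R ξ₀).sub (cutMod_contDiff η ηs R0 ξ₀))
        ((cutMod_compact η ηc R Rp.ne' ξ₀).sub (cutMod_compact η ηc R0 R0p.ne' ξ₀)) ?_
      · have : ∀ ξ, F.ft ξ * testFT (fun x => cutMod η R ξ₀ x - cutMod η R0 ξ₀ x) ξ =
            F.ft ξ * ((R ^ 2 : ℝ) * h (R • (ξ - ξ₀))) - F.ft ξ * ((R0 ^ 2 : ℝ) * h (R0 • (ξ - ξ₀))) := by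
          intro ξ
          rw [testFT_sub _ _ (cutMod_contDiff η ηs R ξ₀).continuous (cutMod_compact η ηc R Rp.ne' ξ₀)
            (cutMod_contDiff η ηs R0 ξ₀).continuous (cutMod_compact η ηc R0 R0p.ne' ξ₀),
            testFT_cutMod η R Rp, testFT_cutMod η R0 R0p, mul_sub]
        simp_rw [this] at hs
        rw [integral_sub (hFi R (R01.trans hR)) (hFi R0 R01)] at hs
        exact sub_eq_zero.mp hs
      · have hsub : tsupport (fun x => cutMod η R ξ₀ x - cutMod η R0 ξ₀ x) ⊆ (Metric.ball (0:R2) R0)ᶜ := by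
          apply closure_minimal _ Metric.isOpen_ball.isClosed_compl
          intro x hx hxb
          apply hx
          have hn : ‖x‖ < R0 := by simpa using hxb
          have e : ∀ S : ℝ, R0 ≤ S → η (S⁻¹ • x) = 1 := by
            intro S hS
            apply η1
            rw [norm_smul, norm_inv, Real.norm_of_nonneg (by linarith),
              inv_mul_le_iff₀ (by linarith)]
            linarith
          simp [cutMod, e R hR, e R0 le_rfl]
        ext x
        simp only [Set.mem_inter_iff, Set.mem_empty_iff_false, iff_false, not_and]
        intro hx hx2
        exact hsub hx (hcl hx2)
    have hlim := limit_lemma h hc A hA hh (fun ξ => F.ft (ξ + ξ₀)) (F.cont.comp (by fun_prop)) (by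
      have hb := fun ξ => amgm_pt' (fun ξ => ((((1 + ‖ξ‖ ^ 2) ^ 2)⁻¹ : ℝ) : ℂ)) 1 zero_le_one
        (by intro ξ; rw [Complex.norm_real, Real.norm_of_nonneg (by positivity), one_mul]) F.ft ξ₀ ξ
      have hi : Integrable (fun ξ => ‖F.ft ξ‖ * ((1 + ‖ξ - ξ₀‖ ^ 2) ^ 2)⁻¹) := by
        refine (F.mem.add (integrable_w2.const_mul ((1 * (2 * (1 + ‖ξ₀‖ ^ 2)) ^ 2) ^ 2))).mono' ?_
          (Eventually.of_forall fun ξ => ?_)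
        · have := F.cont
          have : Continuous (fun ξ : R2 => ((1 + ‖ξ - ξ₀‖ ^ 2) ^ 2)⁻¹) :=
            Continuous.inv₀ (by fun_prop) (fun x => by positivity)
          fun_prop
        · refine le_trans (le_of_eq ?_) (hb ξ)
          simp only [norm_mul, Complex.norm_real, norm_norm]
      simpa using hi.comp_add_right ξ₀)
    have e1 : ∀ R : ℝ, ∫ ξ, F.ft (ξ + ξ₀) * ((R ^ 2 : ℝ) * h (R • ξ)) =
        ∫ ξ, F.ft ξ * ((R ^ 2 : ℝ) * h (R • (ξ - ξ₀))) := by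
      intro R
      rw [← integral_add_right_eq_self (fun ξ => F.ft ξ * ((R ^ 2 : ℝ) * h (R • (ξ - ξ₀)))) ξ₀]
      simp
    simp_rw [e1] at hlim
    have hlim2 := tendsto_nhds_unique hlim
      (tendsto_const_nhds.congr' ((eventually_ge_atTop R0).mono fun R hR => (hconst R hR).symm))
    rw [hI, η1 0 (by simp)] at hlim2
    have : ∀ ξ, F.ft ξ * ((((2 * π) ^ 2)⁻¹ : ℝ) * ((R0 ^ 2 : ℝ) * h (R0 • (ξ - ξ₀)))) =
      (((2 * π) ^ 2)⁻¹ : ℝ) * (F.ft ξ * ((R0 ^ 2 : ℝ) * h (R0 • (ξ - ξ₀)))) := fun ξ => by ring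
    simp_rw [this]
    rw [integral_const_mul, ← hlim2]
    simp only [zero_add, mul_one]
    rw [mul_left_comm, ← Complex.ofReal_mul, inv_mul_cancel₀ (by positivity)]; simp

/-- uniform pointwise bound -/
theorem ptwise_bound (Γ : Set R2) (hΓ : Bornology.IsBounded Γ) (ρ : ℝ) :
    ∃ D : ℝ, 0 ≤ D ∧ ∀ (F : HTildeElt (-(1/2) : ℝ) Γ), wnormSq (-(1/2)) F.ft ≤ 1 →
      ∀ ξ₀ : R2, ‖ξ₀‖ ≤ ρ → ‖F.ft ξ₀‖ ≤ D := by
  obtain ⟨ψ, hc, A, hA, hψ, hrep⟩ := repro Γ hΓ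
  set J := ∫ ξ : R2, ((1 + ‖ξ‖ ^ 2) ^ 2)⁻¹
  have J0 : 0 ≤ J := integral_nonneg fun ξ => by positivity
  refine ⟨(2 * π) ^ 2 + (A * (2 * (1 + ρ ^ 2)) ^ 2) ^ 2 * J, by positivity, fun F hF ξ₀ hξ => ?_⟩
  have hb := fun ξ => amgm_pt' ψ A hA hψ F.ft ξ₀ ξ
  rw [hrep F ξ₀]
  refine (norm_integral_le_of_norm_le (F.mem.add (integrable_w2.const_mul _))
    (Eventually.of_forall hb)).trans ?_
  simp only [Pi.add_apply]
  rw [integral_add F.mem (integrable_w2.const_mul _), integral_const_mul]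
  unfold wnormSq at hF
  rw [inv_mul_le_iff₀ (by positivity), mul_one] at hF
  gcongr

theorem g0hat_norm (k : ℝ) (hk : 0 < k) (ξ : R2) :
    ‖g0hat k ξ‖ = (Real.sqrt |‖ξ‖ ^ 2 - k ^ 2|)⁻¹ := by
  unfold g0hat
  split_ifs with h
  · rw [norm_div, Complex.norm_I, Complex.norm_real, Real.norm_of_nonneg (Real.sqrt_nonneg _),
      abs_of_nonpos (by nlinarith [norm_nonneg ξ]), neg_sub, one_div]
  · rw [norm_div, norm_one, Complex.norm_real, Real.norm_of_nonneg (Real.sqrt_nonneg _),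
      abs_of_nonneg (by nlinarith [norm_nonneg ξ]), one_div]

theorem g0hat_meas (k : ℝ) : Measurable (g0hat k) := by
  unfold g0hat
  refine Measurable.ite (measurableSet_lt (by fun_prop) (by fun_prop)) ?_ ?_
  · fun_prop
  · fun_prop

theorem g0_loc_int (k : ℝ) (hk : 0 < k) :
    Integrable (fun ξ : R2 => (Metric.ball (0 : R2) (2 * k)).indicator (fun ξ => ‖g0hat k ξ‖) ξ) := by
  let f : ℝ → ℝ := (Set.Iio (2 * k)).indicator (fun y => (Real.sqrt |y ^ 2 - k ^ 2|)⁻¹)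
  have hfe : (fun ξ : R2 => (Metric.ball (0 : R2) (2 * k)).indicator (fun ξ => ‖g0hat k ξ‖) ξ) =
      fun ξ : R2 => f ‖ξ‖ := by
    ext ξ
    by_cases h : ‖ξ‖ < 2 * k
    · simp [f, h, g0hat_norm k hk]
    · simp [f, h]
  rw [hfe, integrable_fun_norm_addHaar]
  simp only [finrank_euclideanSpace, Fintype.card_fin]
  have i1 : IntervalIntegrable (fun x : ℝ => x ^ (-(1/2) : ℝ)) volume (0 - k) (2 * k - k) :=
    intervalIntegral.intervalIntegrable_rpow' (by norm_num)
  have i1' := i1.comp_sub_right k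
  have i2 : IntervalIntegrable (fun x : ℝ => x ^ (-(1/2) : ℝ)) volume (k - 0) (k - 2 * k) :=
    intervalIntegral.intervalIntegrable_rpow' (by norm_num)
  have i2' := i2.comp_sub_left k
  simp only [sub_add_cancel, sub_sub_cancel] at i1' i2'
  have i3 := (i1'.norm.add i2'.norm).const_mul (2 * k * (Real.sqrt k)⁻¹)
  rw [intervalIntegrable_iff_integrableOn_Ioo_of_le (by linarith)] at i3
  have : IntegrableOn (fun y : ℝ => y ^ (2 - 1) • f y) (Set.Ioo 0 (2 * k)) := by
    refine Integrable.mono' i3 ?_ ?_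
    · have : Measurable f := Measurable.indicator (by fun_prop) measurableSet_Iio
      exact (by fun_prop : Measurable (fun y : ℝ => y ^ (2 - 1) • f y)).aestronglyMeasurable
    · filter_upwards [ae_restrict_mem measurableSet_Ioo] with y hy
      have hfy : f y = (Real.sqrt |y ^ 2 - k ^ 2|)⁻¹ := by simp [f, hy.2]
      rw [hfy, smul_eq_mul, norm_mul, norm_inv, Real.norm_of_nonneg (Real.sqrt_nonneg _)]
      simp only [Nat.reduceSub, pow_one]
      rw [Real.norm_of_nonneg hy.1.le, mul_assoc]
      refine mul_le_mul hy.2.le ?_ (by positivity) (by positivity)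
      have habs : |y ^ 2 - k ^ 2| = |y - k| * (y + k) := by
        rw [show y ^ 2 - k ^ 2 = (y - k) * (y + k) by ring, abs_mul,
          abs_of_nonneg (by linarith [hy.1] : 0 ≤ y + k)]
      rw [habs, Real.sqrt_mul (abs_nonneg _), mul_inv, mul_comm]
      refine mul_le_mul ?_ ?_ (by positivity) (by positivity)
      · gcongr; linarith [hy.1]
      · have e : ∀ z : ℝ, 0 ≤ z → (Real.sqrt z)⁻¹ = z ^ (-(1/2) : ℝ) := by
          intro z hz; rw [Real.sqrt_eq_rpow, ← Real.rpow_neg hz]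
        rcases le_total k y with h | h
        · rw [abs_of_nonneg (by linarith), e _ (by linarith)]
          exact (Real.le_norm_self _).trans (le_add_of_nonneg_right (norm_nonneg _))
        · rw [abs_of_nonpos (by linarith), neg_sub, e _ (by linarith)]
          exact (Real.le_norm_self _).trans (le_add_of_nonneg_left (norm_nonneg _))
  have h0 : IntegrableOn (fun y : ℝ => y ^ (2 - 1) • f y) (Set.Ici (2 * k)) := by
    refine (integrableOn_zero).congr_fun ?_ measurableSet_Ici
    intro y hy
    have : f y = 0 := by simp only [f]; exact Set.indicator_of_notMem (by simpa using hy) _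
    simp [this]
  have hu : Set.Ioi (0:ℝ) = Set.Ioo 0 (2 * k) ∪ Set.Ici (2 * k) := by
    rw [Set.Ioo_union_Ici_eq_Ioi (by linarith)]
  rw [hu]
  exact this.union h0

theorem g0_far (k : ℝ) (hk : 0 < k) (ξ : R2) (h : 2 * k ≤ ‖ξ‖) : ‖g0hat k ξ‖ * ‖ξ‖ ≤ 2 := by
  have n0 : 0 < ‖ξ‖ := by linarith
  rw [g0hat_norm k hk, inv_mul_le_iff₀]
  · have : ‖ξ‖ / 2 ≤ Real.sqrt |‖ξ‖ ^ 2 - k ^ 2| := by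
      apply Real.le_sqrt_of_sq_le
      rw [abs_of_nonneg (by nlinarith)]
      nlinarith
    linarith
  · apply Real.sqrt_pos.mpr
    rw [abs_pos]; nlinarith

theorem norm_sq_R2 (ξ : R2) : ‖ξ‖ ^ 2 = ξ 0 ^ 2 + ξ 1 ^ 2 := by
  rw [EuclideanSpace.norm_sq_eq]; simp [Fin.sum_univ_two]

theorem abs_coord_le (ξ : R2) (i : Fin 2) : |ξ i| ≤ ‖ξ‖ := by
  simpa using PiLp.norm_apply_le ξ i

theorem curlFt_bound (F1 F2 : R2 → ℂ) (ξ : R2) :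
    ‖curlFt F1 F2 ξ‖ ≤ ‖ξ‖ * (‖F1 ξ‖ + ‖F2 ξ‖) := by
  unfold curlFt
  refine (norm_sub_le _ _).trans ?_
  rw [norm_mul, norm_mul, Complex.norm_real, Complex.norm_real, mul_add]
  gcongr
  · exact abs_coord_le ξ 1
  · exact abs_coord_le ξ 0

/-- The integrand of `E`. -/
theorem E_integrand (k : ℝ) (q G1 G2 : R2 → ℂ) (ξ : R2) (hξ : ξ ≠ 0) :
    Bintegrand k (fun η => Complex.I * (η 1 : ℂ) * q η)
      (fun η => -(Complex.I * (η 0 : ℂ) * q η)) G1 G2 ξ =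
    -((k ^ 2 : ℝ) : ℂ) * Complex.I * g0hat k ξ * q ξ * starRingEnd ℂ (curlFt G1 G2 ξ) := by
  have h1 : dotFt (fun η => Complex.I * (η 1 : ℂ) * q η)
      (fun η => -(Complex.I * (η 0 : ℂ) * q η)) ξ = 0 := by
    unfold dotFt; ring
  have h2 : curlFt (fun η => Complex.I * (η 1 : ℂ) * q η)
      (fun η => -(Complex.I * (η 0 : ℂ) * q η)) ξ = Complex.I * ((‖ξ‖ ^ 2 : ℝ) : ℂ) * q ξ := by
    unfold curlFt; rw [norm_sq_R2]; push_cast; ring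
  have h3 : ((‖ξ‖ ^ 2 : ℝ) : ℂ) ≠ 0 := by
    rw [Complex.ofReal_ne_zero]; exact pow_ne_zero 2 (norm_ne_zero_iff.mpr hξ)
  unfold Bintegrand
  rw [h1, h2]
  field_simp
  ring

theorem ae_ne_zero : ∀ᵐ ξ : R2, ξ ≠ 0 := by
  simp [ae_iff]

theorem E_bdd (Γ : Set R2) (hΓ : Bornology.IsBounded Γ) (k : ℝ) (hk : 0 < k)
    (q : HTildeElt (1/2 : ℝ) Γ) :
    BddAbove {r : ℝ | ∃ U : Xelt Γ, Xnorm U = 1 ∧ r = (Eform k q U).re} := by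
  obtain ⟨D, hD, hpt⟩ := ptwise_bound Γ hΓ (2 * k)
  obtain ⟨M, hM⟩ := (isCompact_closedBall (0:R2) (2 * k)).exists_bound_of_continuousOn
    q.cont.continuousOn
  have M0 : 0 ≤ M := (norm_nonneg _).trans (hM 0 (by simp; linarith))
  set J := ∫ ξ : R2, (Metric.ball (0 : R2) (2 * k)).indicator (fun ξ => ‖g0hat k ξ‖) ξ
  set Q := ∫ ξ : R2, ((1 : ℝ) + ‖ξ‖ ^ 2) ^ (1/2 : ℝ) * ‖q.ft ξ‖ ^ 2
  refine ⟨(k ^ 2 * M * (2 * k) * (2 * D)) * J + 2 * k ^ 2 * (2 * Q + ((2 * π) ^ 2 + (2 * π) ^ 2)), ?_⟩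
  rintro r ⟨U, hU, rfl⟩
  have hU1 : XnormSq U = 1 := by
    unfold Xnorm at hU; exact Real.sqrt_eq_one.mp hU
  have wnn : ∀ s F, 0 ≤ wnormSq s F := fun s F =>
    mul_nonneg (by positivity) (integral_nonneg fun ξ => by positivity)
  unfold XnormSq HnormSq at hU1
  have n1 : wnormSq (-(1/2)) U.c1.ft ≤ 1 := by
    linarith [wnn (-(1/2)) U.c2.ft, wnn (-(1/2)) (divFt U)]
  have n2 : wnormSq (-(1/2)) U.c2.ft ≤ 1 := by
    linarith [wnn (-(1/2)) U.c1.ft, wnn (-(1/2)) (divFt U)]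
  refine (Complex.re_le_norm _).trans ?_
  unfold Eform
  have I1 := (g0_loc_int k hk).const_mul (k ^ 2 * M * (2 * k) * (2 * D))
  have I4 : Integrable (fun ξ : R2 => (1 + ‖ξ‖ ^ 2) ^ (-(1/2) : ℝ) * ‖U.c1.ft ξ‖ ^ 2 +
      (1 + ‖ξ‖ ^ 2) ^ (-(1/2) : ℝ) * ‖U.c2.ft ξ‖ ^ 2) := U.c1.mem.add U.c2.mem
  have I3 : Integrable (fun ξ : R2 => 2 * ((1 + ‖ξ‖ ^ 2) ^ (1/2 : ℝ) * ‖q.ft ξ‖ ^ 2) +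
      ((1 + ‖ξ‖ ^ 2) ^ (-(1/2) : ℝ) * ‖U.c1.ft ξ‖ ^ 2 +
      (1 + ‖ξ‖ ^ 2) ^ (-(1/2) : ℝ) * ‖U.c2.ft ξ‖ ^ 2)) := (q.mem.const_mul 2).add I4
  have I2 := I3.const_mul (2 * k ^ 2)
  refine (norm_integral_le_of_norm_le (I1.add I2) ?_).trans ?_
  · filter_upwards [ae_ne_zero] with ξ hξ
    rw [E_integrand k q.ft _ _ ξ hξ]
    simp only [norm_mul, norm_neg, Complex.norm_real, Complex.norm_I, mul_one, RCLike.norm_conj,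
      Real.norm_of_nonneg (sq_nonneg k), Pi.add_apply]
    by_cases hx : ‖ξ‖ < 2 * k
    · rw [Set.indicator_of_mem (by simpa using hx)]
      have b1 : ‖curlFt U.c1.ft U.c2.ft ξ‖ ≤ (2 * k) * (2 * D) := by
        refine (curlFt_bound _ _ _).trans ?_
        have := hpt U.c1 n1 ξ hx.le
        have := hpt U.c2 n2 ξ hx.le
        gcongr; linarith
      have b2 : ‖q.ft ξ‖ ≤ M := hM ξ (by simpa using hx.le)
      calc _ ≤ k ^ 2 * ‖g0hat k ξ‖ * M * ((2 * k) * (2 * D)) := by gcongr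
        _ = k ^ 2 * M * (2 * k) * (2 * D) * ‖g0hat k ξ‖ := by ring
        _ ≤ _ := le_add_of_nonneg_right (by positivity)
    · rw [Set.indicator_of_notMem (by simpa using hx)]
      have b1 := curlFt_bound U.c1.ft U.c2.ft ξ
      have b2 := g0_far k hk ξ (not_lt.mp hx)
      have ag : ∀ f : ℝ, ‖q.ft ξ‖ * f ≤ (1 + ‖ξ‖ ^ 2) ^ (1/2 : ℝ) * ‖q.ft ξ‖ ^ 2 +
          (1 + ‖ξ‖ ^ 2) ^ (-(1/2) : ℝ) * f ^ 2 := by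
        intro f
        rw [Real.rpow_neg (by positivity)]
        set s := (1 + ‖ξ‖ ^ 2) ^ (1/2 : ℝ)
        have s0 : 0 < s := by positivity
        have : s * ‖q.ft ξ‖ ^ 2 + s⁻¹ * f ^ 2 - ‖q.ft ξ‖ * f =
            s⁻¹ * ((s * ‖q.ft ξ‖ - f / 2) ^ 2 + 3 / 4 * f ^ 2) := by field_simp; ring
        have h3 : 0 ≤ s⁻¹ * ((s * ‖q.ft ξ‖ - f / 2) ^ 2 + 3 / 4 * f ^ 2) := by positivity
        linarith
      have a1 := ag ‖U.c1.ft ξ‖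
      have a2 := ag ‖U.c2.ft ξ‖
      calc _ ≤ k ^ 2 * ‖g0hat k ξ‖ * ‖q.ft ξ‖ * (‖ξ‖ * (‖U.c1.ft ξ‖ + ‖U.c2.ft ξ‖)) := by gcongr
        _ = (‖g0hat k ξ‖ * ‖ξ‖) * (k ^ 2 * (‖q.ft ξ‖ * ‖U.c1.ft ξ‖ + ‖q.ft ξ‖ * ‖U.c2.ft ξ‖)) := by ring
        _ ≤ 2 * (k ^ 2 * (‖q.ft ξ‖ * ‖U.c1.ft ξ‖ + ‖q.ft ξ‖ * ‖U.c2.ft ξ‖)) := by gcongr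
        _ = 2 * k ^ 2 * (‖q.ft ξ‖ * ‖U.c1.ft ξ‖ + ‖q.ft ξ‖ * ‖U.c2.ft ξ‖) := by ring
        _ ≤ 2 * k ^ 2 * (2 * ((1 + ‖ξ‖ ^ 2) ^ (1/2 : ℝ) * ‖q.ft ξ‖ ^ 2) +
            ((1 + ‖ξ‖ ^ 2) ^ (-(1/2) : ℝ) * ‖U.c1.ft ξ‖ ^ 2 +
              (1 + ‖ξ‖ ^ 2) ^ (-(1/2) : ℝ) * ‖U.c2.ft ξ‖ ^ 2)) := by
            apply mul_le_mul_of_nonneg_left _ (by positivity); linarith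
        _ = _ := by ring
  · simp only [Pi.add_apply]
    rw [integral_add I1 I2, integral_const_mul, integral_const_mul,
      integral_add (q.mem.const_mul 2) I4, integral_const_mul, integral_add U.c1.mem U.c2.mem]
    unfold wnormSq at n1 n2
    rw [inv_mul_le_iff₀ (by positivity), mul_one] at n1 n2
    gcongr

theorem testFT_deriv (φ : R2 → ℂ) (hφ : ContDiff ℝ ∞ φ) (hc : HasCompactSupport φ) (v ξ : R2) :
    testFT (fun x => fderiv ℝ φ x v) ξ = -(Complex.I * (rdot v ξ : ℂ)) * testFT φ ξ := by
  let L : R2 →L[ℝ] ℝ := ξ 0 • EuclideanSpace.proj (0 : Fin 2) + ξ 1 • EuclideanSpace.proj (1 : Fin 2)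
  have hL : ∀ x, rdot x ξ = L x := by intro x; simp [L, rdot]; ring
  have hd : ∀ x, HasFDerivAt (fun x : R2 => Complex.exp (Complex.I * (rdot x ξ : ℂ)))
      (Complex.exp (Complex.I * (rdot x ξ : ℂ)) • (Complex.I • (Complex.ofRealCLM.comp L))) x := by
    intro x
    simp_rw [hL]
    have h1 : HasFDerivAt (fun x : R2 => ((L x : ℝ) : ℂ)) (Complex.ofRealCLM.comp L) x :=
      (Complex.ofRealCLM.comp L).hasFDerivAt
    exact (h1.const_mul Complex.I).cexp
  have hfd : ∀ x, fderiv ℝ (fun x : R2 => Complex.exp (Complex.I * (rdot x ξ : ℂ))) x v =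
      Complex.exp (Complex.I * (rdot x ξ : ℂ)) * (Complex.I * (rdot v ξ : ℂ)) := by
    intro x; rw [(hd x).fderiv]; simp [hL]
  have hr : Continuous (fun x : R2 => Complex.exp (Complex.I * (rdot x ξ : ℂ))) := by
    unfold rdot; fun_prop
  have hφ' : Continuous (fun x => fderiv ℝ φ x v) :=
    (hφ.continuous_fderiv (by simp)).clm_apply continuous_const
  have hc' : HasCompactSupport (fun x => fderiv ℝ φ x v) := hc.fderiv_apply ℝ v
  have := integral_mul_fderiv_eq_neg_fderiv_mul_of_integrable (μ := (volume : Measure R2))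
    (f := fun x : R2 => Complex.exp (Complex.I * (rdot x ξ : ℂ))) (g := φ) (v := v)
    (by simp_rw [hfd]
        exact ((hr.mul continuous_const).mul hφ.continuous).integrable_of_hasCompactSupport hc.mul_left)
    ((hr.mul hφ').integrable_of_hasCompactSupport hc'.mul_left)
    ((hr.mul hφ.continuous).integrable_of_hasCompactSupport hc.mul_left)
    (fun x _ => (hd x).differentiableAt)
    (fun x _ => (hφ.differentiable (by simp)).differentiableAt)
  unfold testFT
  rw [this]
  simp_rw [hfd]
  rw [neg_mul, ← integral_const_mul]
  congr 2; ext x; ring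

theorem w_cont (s : ℝ) : Continuous (fun ξ : R2 => ((1:ℝ) + ‖ξ‖ ^ 2) ^ s) :=
  Continuous.rpow_const (by fun_prop) (fun x => Or.inl (by positivity))

theorem w_mul (ξ : R2) : ((1:ℝ) + ‖ξ‖ ^ 2) ^ (-(1/2) : ℝ) * (1 + ‖ξ‖ ^ 2) = (1 + ‖ξ‖ ^ 2) ^ (1/2 : ℝ) := by
  nth_rewrite 2 [← Real.rpow_one (1 + ‖ξ‖ ^ 2)]
  rw [← Real.rpow_add (by positivity)]; norm_num

theorem coord_mem {Γ : Set R2} (q : HTildeElt (1/2 : ℝ) Γ) (c : ℂ) (j : Fin 2) :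
    Integrable (fun ξ : R2 => ((1 : ℝ) + ‖ξ‖ ^ 2) ^ (-(1/2) : ℝ) * ‖c * (ξ j : ℂ) * q.ft ξ‖ ^ 2) := by
  have := q.cont
  refine (q.mem.const_mul (‖c‖ ^ 2)).mono' ?_ (Eventually.of_forall fun ξ => ?_)
  · have := w_cont (-(1/2))
    exact Continuous.aestronglyMeasurable (by fun_prop)
  · rw [Real.norm_of_nonneg (by positivity), norm_mul, norm_mul, Complex.norm_real, mul_pow, mul_pow,
      ← w_mul]
    have : ‖ξ j‖ ^ 2 ≤ 1 + ‖ξ‖ ^ 2 := by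
      have := abs_coord_le ξ j
      rw [Real.norm_eq_abs]
      nlinarith [abs_nonneg (ξ j)]
    calc _ = ‖c‖ ^ 2 * ((1 + ‖ξ‖ ^ 2) ^ (-(1/2) : ℝ) * ‖ξ j‖ ^ 2 * ‖q.ft ξ‖ ^ 2) := by ring
      _ ≤ _ := by gcongr

/-- `c ∂_j q` as an element of `H̃^{-1/2}` -/
def derivElt {Γ : Set R2} (q : HTildeElt (1/2 : ℝ) Γ) (c : ℂ) (j : Fin 2) :
    HTildeElt (-(1/2) : ℝ) Γ where
  ft := fun ξ => c * (ξ j : ℂ) * q.ft ξ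
  cont := by have := q.cont; fun_prop
  mem := coord_mem q c j
  supp := by
    intro φ h1 h2 h3
    set v : R2 := EuclideanSpace.single j 1
    have hv : ∀ ξ : R2, rdot v ξ = ξ j := by
      intro ξ; fin_cases j <;> simp [v, rdot]
    have hs := q.supp (fun x => fderiv ℝ φ x v)
      ((h1.fderiv_right (m := ∞) (by simp)).clm_apply contDiff_const) (h2.fderiv_apply ℝ v) (by
        have hsub : tsupport (fun x => fderiv ℝ φ x v) ⊆ tsupport φ := tsupport_fderiv_apply_subset ℝ v
        exact Set.subset_empty_iff.mp (h3 ▸ Set.inter_subset_inter_left _ hsub))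
    have : ∀ ξ : R2, c * (ξ j : ℂ) * q.ft ξ * testFT φ ξ =
        (c * Complex.I) * (q.ft ξ * testFT (fun x => fderiv ℝ φ x v) ξ) := by
      intro ξ
      rw [testFT_deriv φ h1 h2, hv]
      linear_combination (c * (ξ j : ℂ) * q.ft ξ * testFT φ ξ) * Complex.I_mul_I
    simp_rw [this]
    rw [integral_const_mul, hs, mul_zero]

/-- `-t curl q`. -/
def curlElt {Γ : Set R2} (q : HTildeElt (1/2 : ℝ) Γ) (t : ℝ) : Xelt Γ where
  c1 := derivElt q (-(t * Complex.I)) 1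
  c2 := derivElt q (t * Complex.I) 0
  divMem := by
    have : ∀ ξ : R2, dotFt (derivElt q (-(t * Complex.I)) 1).ft (derivElt q (t * Complex.I) 0).ft ξ = 0 := by
      intro ξ; simp only [dotFt, derivElt]; ring
    simp [this]

/-- The squared seminorm of `curl q`. -/
def curlN {Γ : Set R2} (q : HTildeElt (1/2 : ℝ) Γ) : ℝ :=
  ((2 * π) ^ 2)⁻¹ * ∫ ξ : R2, ((1 : ℝ) + ‖ξ‖ ^ 2) ^ (-(1/2) : ℝ) * (‖ξ‖ ^ 2 * ‖q.ft ξ‖ ^ 2)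

theorem curlElt_norm {Γ : Set R2} (q : HTildeElt (1/2 : ℝ) Γ) (t : ℝ) :
    XnormSq (curlElt q t) = t ^ 2 * curlN q := by
  have hd : wnormSq (-(1/2)) (divFt (curlElt q t)) = 0 := by
    have : ∀ ξ : R2, divFt (curlElt q t) ξ = 0 := by
      intro ξ; simp only [divFt, dotFt, curlElt, derivElt]; ring
    simp [wnormSq, this]
  unfold XnormSq HnormSq
  rw [hd, add_zero]
  unfold wnormSq curlN
  rw [← mul_add, ← integral_add (curlElt q t).c1.mem (curlElt q t).c2.mem, mul_left_comm,
    ← integral_const_mul (t ^ 2)]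
  congr 1
  refine integral_congr_ae (Eventually.of_forall fun ξ => ?_)
  simp only [curlElt, derivElt, norm_mul, norm_neg, Complex.norm_I, Complex.norm_real, Real.norm_eq_abs,
    mul_one, mul_pow, sq_abs]
  rw [norm_sq_R2]; ring

theorem curlN_int {Γ : Set R2} (q : HTildeElt (1/2 : ℝ) Γ) :
    Integrable (fun ξ : R2 => ((1 : ℝ) + ‖ξ‖ ^ 2) ^ (-(1/2) : ℝ) * (‖ξ‖ ^ 2 * ‖q.ft ξ‖ ^ 2)) := by
  refine ((curlElt q 1).c1.mem.add (curlElt q 1).c2.mem).congr (Eventually.of_forall fun ξ => ?_)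
  simp only [curlElt, derivElt, norm_mul, norm_neg, Complex.norm_I, Complex.norm_real, Real.norm_eq_abs,
    mul_one, mul_pow, sq_abs, Pi.add_apply]
  rw [norm_sq_R2]
  norm_num [mul_pow]; try ring

theorem curlN_le {Γ : Set R2} (q : HTildeElt (1/2 : ℝ) Γ) : curlN q ≤ wnormSq (1/2) q.ft := by
  unfold curlN wnormSq
  refine mul_le_mul_of_nonneg_left ?_ (by positivity)
  refine integral_mono (curlN_int q) q.mem fun ξ => ?_
  simp only
  rw [← w_mul, ← mul_assoc]
  gcongr; linarith

theorem g0_re (k : ℝ) (hk : 0 < k) (ξ : R2) :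
    0 ≤ (g0hat k ξ).re ∧ (k < ‖ξ‖ → (‖ξ‖)⁻¹ ≤ (g0hat k ξ).re) := by
  have hre : (g0hat k ξ).re = if ‖ξ‖ < k then 0 else (Real.sqrt (‖ξ‖ ^ 2 - k ^ 2))⁻¹ := by
    unfold g0hat
    split_ifs with h
    · rw [Complex.div_ofReal_re]; simp
    · rw [Complex.div_ofReal_re]; simp
  rw [hre]
  refine ⟨by split_ifs <;> positivity, fun h => ?_⟩
  rw [if_neg (by linarith)]
  have : 0 < ‖ξ‖ ^ 2 - k ^ 2 := by nlinarith
  apply inv_anti₀ (Real.sqrt_pos.mpr this)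
  rw [Real.sqrt_le_left (norm_nonneg ξ)]
  nlinarith

/-- The positive integrand -/
def Pint {Γ : Set R2} (k : ℝ) (q : HTildeElt (1/2 : ℝ) Γ) (ξ : R2) : ℂ :=
  g0hat k ξ * ((k ^ 2 * ‖ξ‖ ^ 2 * ‖q.ft ξ‖ ^ 2 : ℝ) : ℂ)

theorem Pint_int {Γ : Set R2} (k : ℝ) (hk : 0 < k) (q : HTildeElt (1/2 : ℝ) Γ) :
    Integrable (Pint k q) := by
  obtain ⟨M, hM⟩ := (isCompact_closedBall (0:R2) (2 * k)).exists_bound_of_continuousOn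
    q.cont.continuousOn
  have M0 : 0 ≤ M := (norm_nonneg _).trans (hM 0 (by simp; linarith))
  refine (((g0_loc_int k hk).const_mul (k ^ 2 * (2 * k) ^ 2 * M ^ 2)).add
    (q.mem.const_mul (2 * k ^ 2))).mono' ?_ (Eventually.of_forall fun ξ => ?_)
  · have := q.cont
    unfold Pint
    exact (g0hat_meas k).aestronglyMeasurable.mul (Continuous.aestronglyMeasurable (by fun_prop))
  · unfold Pint
    rw [norm_mul, Complex.norm_real, Real.norm_of_nonneg (by positivity)]
    simp only [Pi.add_apply]
    by_cases hx : ‖ξ‖ < 2 * k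
    · rw [Set.indicator_of_mem (by simpa using hx)]
      have b2 : ‖q.ft ξ‖ ≤ M := hM ξ (by simpa using hx.le)
      calc _ ≤ ‖g0hat k ξ‖ * (k ^ 2 * (2 * k) ^ 2 * M ^ 2) := by gcongr
        _ = k ^ 2 * (2 * k) ^ 2 * M ^ 2 * ‖g0hat k ξ‖ := by ring
        _ ≤ _ := le_add_of_nonneg_right (by positivity)
    · rw [Set.indicator_of_notMem (by simpa using hx)]
      have b2 := g0_far k hk ξ (not_lt.mp hx)
      have b3 : ‖ξ‖ ≤ (1 + ‖ξ‖ ^ 2) ^ (1/2 : ℝ) := by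
        rw [← Real.sqrt_eq_rpow]; apply Real.le_sqrt_of_sq_le; linarith
      calc _ = (‖g0hat k ξ‖ * ‖ξ‖) * (k ^ 2 * ‖ξ‖ * ‖q.ft ξ‖ ^ 2) := by ring
        _ ≤ 2 * (k ^ 2 * (1 + ‖ξ‖ ^ 2) ^ (1/2 : ℝ) * ‖q.ft ξ‖ ^ 2) := by gcongr
        _ = _ := by ring

theorem E_curl {Γ : Set R2} (k : ℝ) (q : HTildeElt (1/2 : ℝ) Γ) (t : ℝ) :
    Eform k q (curlElt q t) = t * ∫ ξ, Pint k q ξ := by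
  unfold Eform
  rw [← integral_const_mul]
  apply integral_congr_ae
  filter_upwards [ae_ne_zero] with ξ hξ
  rw [E_integrand k q.ft _ _ ξ hξ]
  have : curlFt (curlElt q t).c1.ft (curlElt q t).c2.ft ξ =
      -(t * Complex.I) * ((‖ξ‖ ^ 2 : ℝ) : ℂ) * q.ft ξ := by
    simp only [curlFt, curlElt, derivElt]; rw [norm_sq_R2]; push_cast; ring
  rw [this]
  simp only [map_mul, map_neg, Complex.conj_ofReal, Complex.conj_I, Pint]
  have hq : q.ft ξ * starRingEnd ℂ (q.ft ξ) = ((‖q.ft ξ‖ ^ 2 : ℝ) : ℂ) := by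
    rw [Complex.mul_conj, Complex.normSq_eq_norm_sq]
  rw [Complex.ofReal_mul, ← hq]
  push_cast
  linear_combination (-((k:ℂ) ^ 2 * g0hat k ξ * t * (‖ξ‖:ℂ) ^ 2 * q.ft ξ * starRingEnd ℂ (q.ft ξ))) *
    Complex.I_mul_I

theorem int_low {Γ : Set R2} (q : HTildeElt (1/2 : ℝ) Γ) :
    Integrable (fun ξ : R2 => ((1 : ℝ) + ‖ξ‖ ^ 2) ^ (-(1/2) : ℝ) * ‖q.ft ξ‖ ^ 2) := by
  have := q.cont
  refine q.mem.mono' ?_ (Eventually.of_forall fun ξ => ?_)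
  · have := w_cont (-(1/2))
    exact Continuous.aestronglyMeasurable (by fun_prop)
  · rw [Real.norm_of_nonneg (by positivity)]
    gcongr
    · nlinarith [sq_nonneg ‖ξ‖]
    · norm_num

theorem P_lower {Γ : Set R2} (k : ℝ) (hk : 0 < k) (q : HTildeElt (1/2 : ℝ) Γ) :
    0 ≤ (∫ ξ, Pint k q ξ).re ∧
    (2 * π * k) ^ 2 * (wnormSq (1/2) q.ft - (1 + k ^ 2) * wnormSq (-(1/2)) q.ft) ≤
      (∫ ξ, Pint k q ξ).re := by
  have hi := Pint_int k hk q
  have hre : (∫ ξ, Pint k q ξ).re = ∫ ξ, (Pint k q ξ).re := (integral_re hi).symm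
  have hpt : ∀ ξ, (Pint k q ξ).re = (g0hat k ξ).re * (k ^ 2 * ‖ξ‖ ^ 2 * ‖q.ft ξ‖ ^ 2) := by
    intro ξ; unfold Pint; rw [Complex.re_mul_ofReal]
  rw [hre]
  constructor
  · refine integral_nonneg fun ξ => ?_
    simp only [Pi.zero_apply]
    rw [hpt]
    exact mul_nonneg (g0_re k hk ξ).1 (by positivity)
  · have I2 : Integrable (fun ξ : R2 => k ^ 2 * (((1 : ℝ) + ‖ξ‖ ^ 2) ^ (1/2 : ℝ) * ‖q.ft ξ‖ ^ 2 -
        (1 + k ^ 2) * (((1 : ℝ) + ‖ξ‖ ^ 2) ^ (-(1/2) : ℝ) * ‖q.ft ξ‖ ^ 2))) :=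
      (q.mem.sub ((int_low q).const_mul (1 + k ^ 2))).const_mul (k ^ 2)
    have e : (2 * π * k) ^ 2 * (wnormSq (1/2) q.ft - (1 + k ^ 2) * wnormSq (-(1/2)) q.ft) =
        ∫ ξ : R2, k ^ 2 * (((1 : ℝ) + ‖ξ‖ ^ 2) ^ (1/2 : ℝ) * ‖q.ft ξ‖ ^ 2 -
        (1 + k ^ 2) * (((1 : ℝ) + ‖ξ‖ ^ 2) ^ (-(1/2) : ℝ) * ‖q.ft ξ‖ ^ 2)) := by
      rw [integral_const_mul, integral_sub q.mem ((int_low q).const_mul (1 + k ^ 2)), integral_const_mul]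
      unfold wnormSq
      field_simp
    rw [e]
    refine integral_mono I2 hi.re fun ξ => ?_
    simp only
    rw [hpt, ← w_mul]
    set s := ((1 : ℝ) + ‖ξ‖ ^ 2) ^ (-(1/2) : ℝ) with hs
    have s0 : 0 < s := by positivity
    rcases lt_or_ge k ‖ξ‖ with h | h
    · have n0 : 0 < ‖ξ‖ := by linarith
      have h1 := (g0_re k hk ξ).2 h
      have hsle : s * ‖ξ‖ ≤ 1 := by
        rw [hs, Real.rpow_neg (by positivity), inv_mul_le_iff₀ (by positivity), mul_one,
          ← Real.sqrt_eq_rpow]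
        apply Real.le_sqrt_of_sq_le; linarith
      have h2 : (‖ξ‖)⁻¹ * (k ^ 2 * ‖ξ‖ ^ 2 * ‖q.ft ξ‖ ^ 2) ≤
          (g0hat k ξ).re * (k ^ 2 * ‖ξ‖ ^ 2 * ‖q.ft ξ‖ ^ 2) := by gcongr
      refine le_trans ?_ h2
      have h3 : (‖ξ‖)⁻¹ * (k ^ 2 * ‖ξ‖ ^ 2 * ‖q.ft ξ‖ ^ 2) = k ^ 2 * ‖q.ft ξ‖ ^ 2 * ‖ξ‖ := by
        field_simp
      rw [h3]
      have h4 : s * (1 + ‖ξ‖ ^ 2) - (1 + k ^ 2) * s ≤ ‖ξ‖ := by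
        nlinarith [mul_pos s0 (pow_pos hk 2)]
      calc _ = k ^ 2 * ‖q.ft ξ‖ ^ 2 * (s * (1 + ‖ξ‖ ^ 2) - (1 + k ^ 2) * s) := by ring
        _ ≤ _ := by gcongr
    · have h1 : 0 ≤ (g0hat k ξ).re * (k ^ 2 * ‖ξ‖ ^ 2 * ‖q.ft ξ‖ ^ 2) :=
        mul_nonneg (g0_re k hk ξ).1 (by positivity)
      refine le_trans ?_ h1
      have h2 : ‖ξ‖ ^ 2 - k ^ 2 ≤ 0 := by nlinarith [norm_nonneg ξ]
      calc _ = (k ^ 2 * s * ‖q.ft ξ‖ ^ 2) * (‖ξ‖ ^ 2 - k ^ 2) := by ring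
        _ ≤ 0 := mul_nonpos_of_nonneg_of_nonpos (by positivity) h2

/-- Lemma 3.3: inf-sup estimate for `E` up to a weaker norm:
there are `c, C > 0` so that for every `q ∈ H̃^{1/2}(Γ)`,
`sup_{‖U‖_X = 1} Re E(q,U) ≥ c ‖q‖_{H̃^{1/2}(Γ)} - C ‖q‖_{H̃^{-1/2}(Γ)}`. -/
theorem statement4 (Γ : Set R2) (hΓ : IsLipschitzDomain Γ) (k : ℝ) (hk : 0 < k) :
    ∃ c > 0, ∃ C > 0, ∀ q : HTildeElt (1/2 : ℝ) Γ,
      c * wnorm (1/2) q.ft - C * wnorm (-(1/2)) q.ft ≤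
        sSup {r : ℝ | ∃ U : Xelt Γ, Xnorm U = 1 ∧ r = (Eform k q U).re} := by
  refine ⟨(2 * π * k) ^ 2, by positivity, (2 * π * k) ^ 2 * Real.sqrt (1 + k ^ 2), by positivity,
    fun q => ?_⟩
  have hbdd := E_bdd Γ hΓ.2.1 k hk q
  obtain ⟨hP0, hP⟩ := P_lower k hk q
  have wnn : ∀ s F, 0 ≤ wnormSq s F := fun s F =>
    mul_nonneg (by positivity) (integral_nonneg fun ξ => by positivity)
  set a := wnorm (1/2) q.ft with ha
  set b := wnorm (-(1/2)) q.ft with hb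
  have ha2 : a ^ 2 = wnormSq (1/2) q.ft := Real.sq_sqrt (wnn _ _)
  have hb2 : b ^ 2 = wnormSq (-(1/2)) q.ft := Real.sq_sqrt (wnn _ _)
  have a0 : 0 ≤ a := Real.sqrt_nonneg _
  have b0 : 0 ≤ b := Real.sqrt_nonneg _
  set D := Real.sqrt (1 + k ^ 2) with hD
  have D0 : 0 ≤ D := Real.sqrt_nonneg _
  have hD2 : D ^ 2 = 1 + k ^ 2 := Real.sq_sqrt (by positivity)
  rw [← ha2, ← hb2, ← hD2] at hP
  set K := (2 * π * k) ^ 2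
  have K0 : 0 < K := by positivity
  set I := (∫ ξ, Pint k q ξ).re with hI
  have N0 : 0 ≤ curlN q := mul_nonneg (by positivity) (integral_nonneg fun ξ => by positivity)
  have hNle : curlN q ≤ a ^ 2 := ha2 ▸ curlN_le q
  rcases N0.eq_or_lt with hN | hN
  · -- degenerate case: `q = 0`
    have hz : (fun ξ : R2 => ((1 : ℝ) + ‖ξ‖ ^ 2) ^ (-(1/2) : ℝ) * (‖ξ‖ ^ 2 * ‖q.ft ξ‖ ^ 2)) =ᵐ[volume] 0 := by
      rw [← integral_eq_zero_iff_of_nonneg (fun ξ => by positivity) (curlN_int q)]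
      unfold curlN at hN
      have h2 : (((2 * π) ^ 2)⁻¹ : ℝ) ≠ 0 := by positivity
      exact (mul_eq_zero.mp hN.symm).resolve_left h2
    have hq0 : ∀ᵐ ξ : R2, q.ft ξ = 0 := by
      filter_upwards [hz, ae_ne_zero] with ξ h1 h2
      have n0 : 0 < ‖ξ‖ := norm_pos_iff.mpr h2
      have w0 : 0 < ((1 : ℝ) + ‖ξ‖ ^ 2) ^ (-(1/2) : ℝ) := by positivity
      simp only [Pi.zero_apply, mul_eq_zero, w0.ne', false_or] at h1
      rcases h1 with h1 | h1
      · exact absurd h1 (by positivity)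
      · simpa using h1
    have ha0 : a = 0 := by
      have : wnormSq (1/2) q.ft = 0 := by
        unfold wnormSq
        rw [integral_eq_zero_of_ae, mul_zero]
        filter_upwards [hq0] with ξ h
        simp [h]
      rw [this] at ha2
      exact pow_eq_zero_iff two_ne_zero |>.mp ha2
    rw [ha0, mul_zero]
    have : 0 ≤ sSup {r : ℝ | ∃ U : Xelt Γ, Xnorm U = 1 ∧ r = (Eform k q U).re} := by
      apply Real.sSup_nonneg
      rintro r ⟨U, -, rfl⟩
      have : Eform k q U = 0 := by
        unfold Eform
        apply integral_eq_zero_of_ae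
        filter_upwards [hq0, ae_ne_zero] with ξ h h2
        rw [E_integrand k q.ft _ _ ξ h2]
        simp [h]
      simp [this]
    have : 0 ≤ K * D * b := by positivity
    linarith
  · set n := Real.sqrt (curlN q) with hn
    have n0 : 0 < n := Real.sqrt_pos.mpr hN
    have hn2 : n ^ 2 = curlN q := Real.sq_sqrt N0
    have hna : n ≤ a := by
      rw [← hn2] at hNle
      exact (pow_le_pow_iff_left₀ n0.le a0 two_ne_zero).mp hNle
    have hmem : n⁻¹ * I ∈ {r : ℝ | ∃ U : Xelt Γ, Xnorm U = 1 ∧ r = (Eform k q U).re} := by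
      refine ⟨curlElt q n⁻¹, ?_, ?_⟩
      · unfold Xnorm
        rw [curlElt_norm, ← hn2, ← mul_pow, inv_mul_cancel₀ n0.ne']; simp
      · rw [E_curl, Complex.re_ofReal_mul]
    refine le_trans ?_ (le_csSup hbdd hmem)
    rcases le_total (a - D * b) 0 with h | h
    · have h1 : K * a - K * D * b = K * (a - D * b) := by ring
      rw [h1]
      exact (mul_nonpos_of_nonneg_of_nonpos K0.le h).trans (by positivity)
    · rw [le_inv_mul_iff₀ n0]
      refine le_trans ?_ hP
      have h1 : K * (a ^ 2 - D ^ 2 * b ^ 2) - n * (K * a - K * D * b) =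
        K * (a - D * b) * ((a - n) + D * b) := by ring
      have h2 : 0 ≤ K * (a - D * b) * ((a - n) + D * b) :=
        mul_nonneg (mul_nonneg K0.le h) (by nlinarith [mul_nonneg D0 b0])
      linarith

end
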